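/- Let f : M⁴ → A be a G-invariant A-multilinear map, and write m_i′ := m_i − m_{i+1}. Then the birack 3-cocycle Φ_f := f ∘ ψ₃ ∘ γ₃ : C^{BR}_3(X;ℤ)_X → A of the G-Alexander biquandle X with X-set X satisfies Φ_f((m₀,g₀),(m₁,g₁),(m₂,g₂),(m₃,g₃)) = f(m₀′ − m₀′·(φ(g₁)⁻¹g₁), m₁′, m₂′, m₃ − m₃·(φ(g₃)g₃⁻¹)) − f((m₀′ − m₀′·(φ(g₁)⁻¹g₁))g₂, m₁′g₂, m₂′φ(g₂), (m₃ − m₃·(φ(g₃)g₃⁻¹))φ(g₂)) for all m₀,…,m₃ ∈ M and g₀,…,g₃ ∈ G. -/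

import Mathlib

open FreeAbelianGroup
open scoped TensorProduct

namespace GAlex

variable {G M A : Type*} [Group G] [AddCommGroup M] [DistribMulAction Gᵐᵒᵖ M] [AddCommGroup A]

/-- The right action `m · g` of a group element `g : G` on `m : M`
(coming from the right `ℤ[G]`-module structure on `M`). -/
def ract (m : M) (g : G) : M := MulOpposite.op g • m

variable (φ : G →* G)

/-- The operation `(m,g) ⊳ (n,h) = (mh + n(φ(h) − h), h⁻¹gh)` of the `G`-Alexander biquandle. -/
def under (x y : M × G) : M × G :=
  (ract x.1 y.2 + ract y.1 (φ y.2) - ract y.1 y.2, y.2⁻¹ * x.2 * y.2)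

/-- The operation `(m,g) ⊚ (n,h) = (mφ(h), g)` of the `G`-Alexander biquandle. -/
def overOp (x y : M × G) : M × G := (ract x.1 (φ y.2), x.2)

/-- The face `g_{⟨p⟩}` (delete the `p`-th entry). -/
def dGdel (n : ℕ) (p : Fin (n + 1)) (g : Fin (n + 1) → G) : Fin n → G :=
  fun j => g (p.succAbove j)

/-- The face `g_{⟨⊲p⟩}` (conjugate the first entries by `g p` and delete the `p`-th entry). -/
def dGconj (n : ℕ) (p : Fin (n + 1)) (g : Fin (n + 1) → G) : Fin n → G :=
  fun j => if (j : ℕ) < (p : ℕ) then (g p)⁻¹ * g j.castSucc * g p else g j.succ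

/-- The face `m_{⟨p⟩}` (merge the two entries adjacent to position `p`;
for `p = 0` drop the first entry). -/
def dMmer (n : ℕ) (p : Fin (n + 1)) (m : Fin (n + 1) → M) : Fin n → M :=
  fun j =>
    if (j : ℕ) + 1 < (p : ℕ) then m j.castSucc
    else if (j : ℕ) + 1 = (p : ℕ) then m j.castSucc + m j.succ
    else m j.succ

/-- The face `m_{⟨⊲p⟩}`. -/
def dMconj (n : ℕ) (p : Fin (n + 1)) (g : Fin (n + 1) → G) (m : Fin (n + 1) → M) : Fin n → M :=
  fun j =>
    if (j : ℕ) + 1 < (p : ℕ) then ract (m j.castSucc) (g p)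
    else if (j : ℕ) + 1 = (p : ℕ) then ract (m j.castSucc) (g p) + ract (m j.succ) (φ (g p))
    else ract (m j.succ) (φ (g p))

/-- The boundary map `∂^{BR_U}_{n+1} : C^{BR_U}_{n+1}(X;ℤ) → C^{BR_U}_n(X;ℤ)`
(the boundary `∂^{BR_U}_k` is `0` for `k ≤ 1`, which agrees with this formula at `n = 0`). -/
def dBRU (n : ℕ) :
    FreeAbelianGroup ((Fin (n + 1) → G) × (Fin (n + 1) → M)) →+
      FreeAbelianGroup ((Fin n → G) × (Fin n → M)) :=
  FreeAbelianGroup.lift fun x =>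
    ∑ p : Fin (n + 1),
      (-1 : ℤ) ^ (p : ℕ) •
        (FreeAbelianGroup.of (dGdel n p x.1, dMmer n p x.2) -
          FreeAbelianGroup.of (dGconj n p x.1, dMconj φ n p x.1 x.2))

/-- The birack boundary map `∂^{BR}_{n+1} : C^{BR}_{n+1}(X;ℤ) → C^{BR}_n(X;ℤ)`
for the `G`-Alexander biquandle `X = M × G` (with trivial `X`-set). -/
def dBR (n : ℕ) :
    FreeAbelianGroup (Fin (n + 1) → M × G) →+ FreeAbelianGroup (Fin n → M × G) :=
  FreeAbelianGroup.lift fun x =>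
    ∑ p : Fin (n + 1),
      (-1 : ℤ) ^ (p : ℕ) •
        (FreeAbelianGroup.of (fun j => x (p.succAbove j)) -
          FreeAbelianGroup.of (fun j : Fin n =>
            if (j : ℕ) < (p : ℕ) then under φ (x j.castSucc) (x p)
            else overOp φ (x j.succ) (x p)))

/-- `γ_n((m₁,g₁),…,(m_n,g_n)) = (g₁,…,g_n; m₁−m₂, …, m_{n−1}−m_n, m_n)`. -/
def gammaMap (n : ℕ) :
    FreeAbelianGroup (Fin n → M × G) →+ FreeAbelianGroup ((Fin n → G) × (Fin n → M)) :=
  FreeAbelianGroup.lift fun x =>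
    FreeAbelianGroup.of
      (fun j => (x j).2,
       fun j => (x j).1 - if h : (j : ℕ) + 1 < n then (x ⟨(j : ℕ) + 1, h⟩).1 else 0)

/-- `r_n(g₁,…,g_n; m₁,…,m_n) = ((m₁+⋯+m_n, g₁), (m₂+⋯+m_n, g₂), …, (m_n, g_n))`. -/
def rMap (n : ℕ) :
    FreeAbelianGroup ((Fin n → G) × (Fin n → M)) →+ FreeAbelianGroup (Fin n → M × G) :=
  FreeAbelianGroup.lift fun p =>
    FreeAbelianGroup.of fun j => ((∑ i ∈ Finset.Ici j, p.2 i), p.1 j)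

/-- The boundary map `∂^{BR_U}_{d+1}` of `C^{BR_U}_*(X;ℤ)_X` (the version with `X`-set `X`,
whose degree-`d` chain group is free on `(1+d)`-tuples); it is `0` in degrees `≤ 1`. -/
def dBRUX : (d : ℕ) →
    FreeAbelianGroup ((Fin (d + 2) → G) × (Fin (d + 2) → M)) →+
      FreeAbelianGroup ((Fin (d + 1) → G) × (Fin (d + 1) → M))
  | 0 => 0
  | d + 1 =>
    FreeAbelianGroup.lift fun x =>
      ∑ i : Fin (d + 2),
        (-1 : ℤ) ^ (i : ℕ) •
          (FreeAbelianGroup.of (dGdel (d + 2) i.succ x.1, dMmer (d + 2) i.succ x.2) -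
            FreeAbelianGroup.of (dGconj (d + 2) i.succ x.1, dMconj φ (d + 2) i.succ x.1 x.2))

/-- The boundary map `∂^{BR}_{d+1}` of `C^{BR}_*(X;ℤ)_X` (the version with `X`-set `X`);
it is `0` in degrees `≤ 1`. -/
def dBRX : (d : ℕ) →
    FreeAbelianGroup (Fin (d + 2) → M × G) →+ FreeAbelianGroup (Fin (d + 1) → M × G)
  | 0 => 0
  | d + 1 =>
    FreeAbelianGroup.lift fun x =>
      ∑ i : Fin (d + 2),
        (-1 : ℤ) ^ (i : ℕ) •
          (FreeAbelianGroup.of (fun j => x (i.succ.succAbove j)) -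
            FreeAbelianGroup.of (fun j : Fin (d + 2) =>
              if (j : ℕ) < (i : ℕ) + 1 then under φ (x j.castSucc) (x i.succ)
              else overOp φ (x j.succ) (x i.succ)))


/-- The subgroup of `G`-coinvariants relations in `C^{gp}_n(M;ℤ)`:
generated by all `(m₁g,…,m_ng) − (m₁,…,m_n)`. -/
def coinvSub (n : ℕ) : AddSubgroup (FreeAbelianGroup (Fin n → M)) :=
  AddSubgroup.closure
    {z | ∃ (m : Fin n → M) (g : G),
        z = FreeAbelianGroup.of (fun i => ract (m i) g) - FreeAbelianGroup.of m}

/-- The coinvariant group chain group `C^{gp}_n(M;ℤ)_G`. -/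
abbrev CgpG (n : ℕ) : Type _ :=
  FreeAbelianGroup (Fin n → M) ⧸ coinvSub (G := G) (M := M) n

/-- The group-homology boundary map `∂^{gp}_{n+1} : C^{gp}_{n+1}(M;ℤ) → C^{gp}_n(M;ℤ)`
(it is `0` in degrees `≤ 1`, which agrees with this formula at `n = 0`). -/
def dgp (n : ℕ) :
    FreeAbelianGroup (Fin (n + 1) → M) →+ FreeAbelianGroup (Fin n → M) :=
  FreeAbelianGroup.lift fun m =>
    (∑ p : Fin (n + 1), (-1 : ℤ) ^ (p : ℕ) • FreeAbelianGroup.of (dMmer n p m)) +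
      (-1 : ℤ) ^ (n + 1) • FreeAbelianGroup.of fun j : Fin n => m j.castSucc

/-- `|k| = k₁ + ⋯ + k_n`. -/
def wt {n : ℕ} (k : Fin n → Bool) : ℕ := ∑ i, if k i then 1 else 0

/-- `g_{k,i} = φ(g₀^{k₀} ⋯ g_i^{k_i}) · g_{i+1}^{k_{i+1}} ⋯ g_{n-1}^{k_{n-1}}`
(indices written `0`-based; the products are ordered). -/
def gki {n : ℕ} (g : Fin n → G) (k : Fin n → Bool) (i : Fin n) : G :=
  φ ((((List.finRange n).filter fun j => decide (j ≤ i)).map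
        fun j => if k j then g j else 1).prod) *
    (((List.finRange n).filter fun j => decide (i < j)).map
        fun j => if k j then g j else 1).prod

/-- The value of `ψ` on a generator:
`Σ_{k, k₀ = 0} (−1)^{|k|} (m₀ g_{k,0}, …, m_n g_{k,n})`, as an element of the free
abelian group (before passing to coinvariants). -/
def psiVal (n : ℕ) (x : (Fin (n + 1) → G) × (Fin (n + 1) → M)) :
    FreeAbelianGroup (Fin (n + 1) → M) :=
  ∑ k ∈ Finset.univ.filter fun k : Fin (n + 1) → Bool => k 0 = false,
    (-1 : ℤ) ^ wt k • FreeAbelianGroup.of fun i => ract (x.2 i) (gki φ x.1 k i)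

/-- `ψ` as a homomorphism into the free abelian group (before coinvariants). -/
def psiFree (n : ℕ) :
    FreeAbelianGroup ((Fin (n + 1) → G) × (Fin (n + 1) → M)) →+
      FreeAbelianGroup (Fin (n + 1) → M) :=
  FreeAbelianGroup.lift (psiVal φ n)

/-- The homomorphism `ψ : C^{BR_U} → C^{gp}(M;ℤ)_G`. -/
def psiG (n : ℕ) :
    FreeAbelianGroup ((Fin (n + 1) → G) × (Fin (n + 1) → M)) →+
      CgpG (G := G) (M := M) (n + 1) :=
  (QuotientAddGroup.mk' (coinvSub (G := G) (M := M) (n + 1))).comp (psiFree φ n)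

/-- The homomorphism `ψ_{•,λ}`, sending a generator `x` to `ψ(x) ⊗ λ(x₁)` where `x₁` is the
first `G`-entry of `x`. -/
noncomputable def psiLam (lam : G → A) (n : ℕ) :
    FreeAbelianGroup ((Fin (n + 1) → G) × (Fin (n + 1) → M)) →+
      TensorProduct ℤ (CgpG (G := G) (M := M) (n + 1)) A :=
  FreeAbelianGroup.lift fun x =>
    (QuotientAddGroup.mk' (coinvSub (G := G) (M := M) (n + 1)) (psiVal φ n x)) ⊗ₜ[ℤ]
      lam (x.1 0)

/-- `D^{gp}_n(M;ℤ)_G`: the image in the coinvariants of the subgroup generated by tuples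
with a vanishing entry in a position `1 ≤ i ≤ n−1`. -/
def DgpGsub (n : ℕ) : AddSubgroup (CgpG (G := G) (M := M) n) :=
  (AddSubgroup.closure
      {z : FreeAbelianGroup (Fin n → M) |
        ∃ (m : Fin n → M) (i : Fin n),
          (i : ℕ) + 1 < n ∧ m i = 0 ∧ z = FreeAbelianGroup.of m}).map
    (QuotientAddGroup.mk' (coinvSub (G := G) (M := M) n))

/-!
Acting diagonally by the inverse of `φ(x) z` turns the term of `ψ₃` with
`(x, y, z) = (g₁^k₁, g₂^k₂, g₃^k₃)` into `(m₀ φ(x)⁻¹x y, m₁ y, m₂ φ(y), m₃ φ(z)z⁻¹ φ(y))`: now `x`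
occurs only in the first entry and `z` only in the last. Additivity in these two entries collapses
the alternating sum over `k₁` and `k₃`, and the two terms left are those with `k₂ = 0` and `k₂ = 1`.
-/

/-- The power `g ^ b` with exponent `b ∈ {0, 1}` encoded as a Boolean, as in the products
`g₁^{k₁} ⋯ g_n^{k_n}` indexed by the vertices `k` of a cube. -/
def boolPow (g : G) (b : Bool) : G := if b then g else 1

theorem ract_one (m : M) : ract m (1 : G) = m := by
  simp [ract]

theorem ract_ract (m : M) (g h : G) : ract (ract m g) h = ract m (g * h) := by
  simp [ract, smul_smul]

theorem ract_sub (m n : M) (g : G) : ract (m - n) g = ract m g - ract n g :=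
  smul_sub _ _ _

theorem map_sub_sub_of_biadditive {L N P : Type*} [AddGroup L] [AddGroup N] [AddCommGroup P]
    (b : L → N → P) (hl : ∀ x x' y, b (x + x') y = b x y + b x' y)
    (hr : ∀ x y y', b x (y + y') = b x y + b x y') (x x' : L) (y y' : N) :
    b (x - x') (y - y') = b x y - b x' y - b x y' + b x' y' := by
  have sub_left (z : N) : b (x - x') z = b x z - b x' z :=
    (AddMonoidHom.mk' (b · z) (hl · · z)).map_sub x x'
  have sub_right (w : L) : b w (y - y') = b w y - b w y' :=
    (AddMonoidHom.mk' (b w) (hr w)).map_sub y y'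
  rw [sub_right, sub_left, sub_left]
  abel

theorem wt_cons {n : ℕ} (b : Bool) (k : Fin n → Bool) :
    wt (Fin.cons b k : Fin (n + 1) → Bool) = (if b then 1 else 0) + wt k :=
  Fin.sum_univ_succ _

theorem sum_cube_succ {B : Type*} [AddCommMonoid B] {n : ℕ}
    (F : (Fin (n + 1) → Bool) → B) :
    ∑ k, F k = ∑ k : Fin n → Bool, (F (Fin.cons false k) + F (Fin.cons true k)) := by
  rw [← (Fin.consEquiv fun _ => Bool).sum_comp, Fintype.sum_prod_type, Fintype.sum_bool,
    add_comm, Finset.sum_add_distrib]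
  rfl

theorem sum_cube_filter_zero_eq_false {B : Type*} [AddCommMonoid B] {n : ℕ}
    (F : (Fin (n + 1) → Bool) → B) :
    ∑ k with k 0 = false, F k = ∑ k : Fin n → Bool, F (Fin.cons false k) := by
  simp [Finset.sum_filter, sum_cube_succ]

theorem alternating_sum_cube_succ {n : ℕ} (F : (Fin (n + 1) → Bool) → A) :
    ∑ k, (-1 : ℤ) ^ wt k • F k =
      ∑ k : Fin n → Bool, (-1 : ℤ) ^ wt k • (F (Fin.cons false k) - F (Fin.cons true k)) := by
  simp [sum_cube_succ, wt_cons, pow_add, sub_eq_add_neg]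

theorem alternating_sum_cube_three (F : Bool → Bool → Bool → A) :
    ∑ k : Fin 3 → Bool, (-1 : ℤ) ^ wt k • F (k 0) (k 1) (k 2) =
      (F false false false - F true false false - F false false true + F true false true) -
        (F false true false - F true true false - F false true true + F true true true) := by
  have wt_eq_zero (k : Fin 0 → Bool) : wt k = 0 := rfl
  simp only [alternating_sum_cube_succ, Fintype.sum_unique, wt_eq_zero, pow_zero, one_smul]
  change F false false false - F true false false - (F false true false - F true true false) -
      (F false false true - F true false true - (F false true true - F true true true)) = _
  abel

section

theorem gki_eq_prod_boolPow {n : ℕ} (g : Fin n → G) (k : Fin n → Bool) (i : Fin n) :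
    gki φ g k i =
      φ (((List.finRange n).filter (· ≤ i)).map fun j => boolPow (g j) (k j)).prod *
        (((List.finRange n).filter (i < ·)).map fun j => boolPow (g j) (k j)).prod :=
  rfl

theorem gki_zero {n : ℕ} (g : Fin (n + 1) → G) (k : Fin (n + 1) → Bool) :
    gki φ g k 0 = φ (boolPow (g 0) (k 0)) *
      (List.ofFn fun j : Fin n => boolPow (g j.succ) (k j.succ)).prod := by
  simp [gki_eq_prod_boolPow, List.finRange_succ, List.filter_map, Function.comp_def,
    List.ofFn_eq_map]

theorem gki_succ {n : ℕ} (g : Fin (n + 1) → G) (k : Fin (n + 1) → Bool) (i : Fin n) :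
    gki φ g k i.succ =
      φ (boolPow (g 0) (k 0)) * gki φ (Fin.tail g) (Fin.tail k) i := by
  simp [gki_eq_prod_boolPow, List.finRange_succ, List.filter_map, Function.comp_def, Fin.tail,
    mul_assoc]

theorem lift_psiFree_of {n : ℕ} (F : (Fin (n + 1) → M) → A) (g : Fin (n + 1) → G)
    (m : Fin (n + 1) → M) :
    FreeAbelianGroup.lift F (psiFree φ n (FreeAbelianGroup.of (g, m))) =
      ∑ k : Fin n → Bool,
        (-1 : ℤ) ^ wt k • F fun i => ract (m i) (gki φ g (Fin.cons false k) i) := by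
  simp only [psiFree, psiVal, FreeAbelianGroup.lift_apply_of, map_sum, map_zsmul,
    sum_cube_filter_zero_eq_false, wt_cons, Bool.false_eq_true, if_false, zero_add]

theorem gki_fin_four_of_zero_eq_false (g : Fin 4 → G) {k : Fin 4 → Bool} (hk : k 0 = false) :
    gki φ g k =
      let x := boolPow (g 1) (k 1)
      let y := boolPow (g 2) (k 2)
      let z := boolPow (g 3) (k 3)
      ![x * (y * z), φ x * (y * z), φ x * φ y * z, φ x * φ y * φ z] := by
  have boolPow_false : boolPow (g 0) false = 1 := rfl
  simp only [funext_iff, Fin.forall_fin_succ, gki_succ, gki_zero]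
  simp [Fin.tail, hk, boolPow_false, mul_assoc]

variable {φ}

theorem apply_ract_eq_of_invariant {B : Type*}
    (hφ : ∀ g : G, φ g ∈ Subgroup.center G) {f : M → M → M → M → B}
    (hfG : ∀ (m n p q : M) (g : G),
      f (ract m g) (ract n g) (ract p g) (ract q g) = f m n p q)
    (m n p q : M) (x y z : G) :
    f (ract m (x * (y * z))) (ract n (φ x * (y * z))) (ract p (φ x * φ y * z))
        (ract q (φ x * φ y * φ z)) =
      f (ract m ((φ x)⁻¹ * x * y)) (ract n y) (ract p (φ y)) (ract q (φ z * z⁻¹ * φ y)) := by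
  have comm (g h : G) : h * φ g = φ g * h := Subgroup.mem_center_iff.1 (hφ g) h
  have m_exponent : (φ x)⁻¹ * x * y * (φ x * z) = x * (y * z) := by
    rw [← mul_assoc, comm x]; group
  have n_exponent : y * (φ x * z) = φ x * (y * z) := by
    rw [← mul_assoc, comm x, mul_assoc]
  have p_exponent : φ y * (φ x * z) = φ x * φ y * z := by
    rw [← mul_assoc, comm x]
  have q_exponent : φ z * z⁻¹ * φ y * (φ x * z) = φ x * φ y * φ z := by
    rw [← mul_assoc, comm x, comm y]; group
  rw [← hfG (ract m ((φ x)⁻¹ * x * y)) _ _ _ (φ x * z)]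
  simp only [ract_ract, m_exponent, n_exponent, p_exponent, q_exponent]

theorem lift_psiFree_three_of (hφ : ∀ g : G, φ g ∈ Subgroup.center G)
    (f : M → M → M → M → A)
    (hf₁ : ∀ m m' n p q : M, f (m + m') n p q = f m n p q + f m' n p q)
    (hf₄ : ∀ m n p q q' : M, f m n p (q + q') = f m n p q + f m n p q')
    (hfG : ∀ (m n p q : M) (g : G),
      f (ract m g) (ract n g) (ract p g) (ract q g) = f m n p q)
    (g : Fin 4 → G) (m : Fin 4 → M) :
    FreeAbelianGroup.lift (fun v : Fin 4 → M => f (v 0) (v 1) (v 2) (v 3))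
        (psiFree φ 3 (FreeAbelianGroup.of (g, m))) =
      f (m 0 - ract (m 0) ((φ (g 1))⁻¹ * g 1)) (m 1) (m 2)
          (m 3 - ract (m 3) (φ (g 3) * (g 3)⁻¹)) -
        f (ract (m 0 - ract (m 0) ((φ (g 1))⁻¹ * g 1)) (g 2)) (ract (m 1) (g 2))
          (ract (m 2) (φ (g 2))) (ract (m 3 - ract (m 3) (φ (g 3) * (g 3)⁻¹)) (φ (g 2))) := by
  let T (x y z : G) : A := f (ract (m 0) ((φ x)⁻¹ * x * y)) (ract (m 1) y) (ract (m 2) (φ y))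
    (ract (m 3) (φ z * z⁻¹ * φ y))
  have mixed_difference (y : G) :
      T 1 y 1 - T (g 1) y 1 - T 1 y (g 3) + T (g 1) y (g 3) =
        f (ract (m 0 - ract (m 0) ((φ (g 1))⁻¹ * g 1)) y) (ract (m 1) y) (ract (m 2) (φ y))
          (ract (m 3 - ract (m 3) (φ (g 3) * (g 3)⁻¹)) (φ y)) := by
    simp only [ract_sub, ract_ract]
    rw [map_sub_sub_of_biadditive (f · (ract (m 1) y) (ract (m 2) (φ y)) ·)
      (hf₁ · · _ _ ·) (hf₄ · _ _ · ·)]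
    simp [T]
  calc
    _ = ∑ k : Fin 3 → Bool, (-1 : ℤ) ^ wt k •
          T (boolPow (g 1) (k 0)) (boolPow (g 2) (k 1)) (boolPow (g 3) (k 2)) := by
      rw [lift_psiFree_of]
      refine Finset.sum_congr rfl fun k _ => congrArg _ ?_
      rw [gki_fin_four_of_zero_eq_false φ g rfl]
      exact apply_ract_eq_of_invariant hφ hfG _ _ _ _ _ _ _
    _ = (T 1 1 1 - T (g 1) 1 1 - T 1 1 (g 3) + T (g 1) 1 (g 3)) -
          (T 1 (g 2) 1 - T (g 1) (g 2) 1 - T 1 (g 2) (g 3) + T (g 1) (g 2) (g 3)) :=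
      alternating_sum_cube_three fun a b c =>
        T (boolPow (g 1) a) (boolPow (g 2) b) (boolPow (g 3) c)
    _ = _ := by
      simp only [mixed_difference, ract_one, map_one]

end

theorem gammaMap_four_of {H N : Type*} [AddCommGroup N] (m₀ m₁ m₂ m₃ : N) (g₀ g₁ g₂ g₃ : H) :
    gammaMap 4 (FreeAbelianGroup.of ![(m₀, g₀), (m₁, g₁), (m₂, g₂), (m₃, g₃)]) =
      FreeAbelianGroup.of (![g₀, g₁, g₂, g₃], ![m₀ - m₁, m₁ - m₂, m₂ - m₃, m₃]) := by
  rw [gammaMap, FreeAbelianGroup.lift_apply_of]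
  congr 2 <;> simp [funext_iff, Fin.forall_fin_succ]

theorem birackX_three_cocycle_formula_general (hφ : ∀ g : G, φ g ∈ Subgroup.center G)
    (f : M → M → M → M → A)
    (hf₁ : ∀ m m' n p q : M, f (m + m') n p q = f m n p q + f m' n p q)
    (hf₄ : ∀ m n p q q' : M, f m n p (q + q') = f m n p q + f m n p q')
    (hfG : ∀ (m n p q : M) (g : G),
      f (ract m g) (ract n g) (ract p g) (ract q g) = f m n p q) :
    ∀ (m₀ m₁ m₂ m₃ : M) (g₀ g₁ g₂ g₃ : G),
      FreeAbelianGroup.lift (fun v : Fin 4 → M => f (v 0) (v 1) (v 2) (v 3))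
          (psiFree φ 3
            (gammaMap 4
              (FreeAbelianGroup.of ![(m₀, g₀), (m₁, g₁), (m₂, g₂), (m₃, g₃)]))) =
        f ((m₀ - m₁) - ract (m₀ - m₁) ((φ g₁)⁻¹ * g₁)) (m₁ - m₂) (m₂ - m₃)
            (m₃ - ract m₃ (φ g₃ * g₃⁻¹)) -
          f (ract ((m₀ - m₁) - ract (m₀ - m₁) ((φ g₁)⁻¹ * g₁)) g₂) (ract (m₁ - m₂) g₂)
            (ract (m₂ - m₃) (φ g₂)) (ract (m₃ - ract m₃ (φ g₃ * g₃⁻¹)) (φ g₂)) := by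
  intro m₀ m₁ m₂ m₃ g₀ g₁ g₂ g₃
  rw [gammaMap_four_of]
  exact lift_psiFree_three_of hφ f hf₁ hf₄ hfG _ _

/-- For a `G`-invariant `A`-multilinear map `f : M⁴ → A`, the birack
`3`-cocycle `Φ_f = f ∘ ψ₃ ∘ γ₃ : C^{BR}_3(X;ℤ)_X → A` (with `X`-set `X`) satisfies, with
`mᵢ' = mᵢ − mᵢ₊₁`:
`Φ_f((m₀,g₀),…,(m₃,g₃)) =
  f(m₀' − m₀'·(φ(g₁)⁻¹g₁), m₁', m₂', m₃ − m₃·(φ(g₃)g₃⁻¹))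
  − f((m₀' − m₀'·(φ(g₁)⁻¹g₁))g₂, m₁'g₂, m₂'φ(g₂), (m₃ − m₃·(φ(g₃)g₃⁻¹))φ(g₂))`. -/
theorem birackX_three_cocycle_formula (hφ : ∀ g : G, φ g ∈ Subgroup.center G)
    (f : M → M → M → M → A)
    (hf₁ : ∀ m m' n p q : M, f (m + m') n p q = f m n p q + f m' n p q)
    (hf₂ : ∀ m n n' p q : M, f m (n + n') p q = f m n p q + f m n' p q)
    (hf₃ : ∀ m n p p' q : M, f m n (p + p') q = f m n p q + f m n p' q)
    (hf₄ : ∀ m n p q q' : M, f m n p (q + q') = f m n p q + f m n p q')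
    (hfG : ∀ (m n p q : M) (g : G),
      f (ract m g) (ract n g) (ract p g) (ract q g) = f m n p q) :
    ∀ (m₀ m₁ m₂ m₃ : M) (g₀ g₁ g₂ g₃ : G),
      FreeAbelianGroup.lift (fun v : Fin 4 → M => f (v 0) (v 1) (v 2) (v 3))
          (psiFree φ 3
            (gammaMap 4
              (FreeAbelianGroup.of ![(m₀, g₀), (m₁, g₁), (m₂, g₂), (m₃, g₃)]))) =
        f ((m₀ - m₁) - ract (m₀ - m₁) ((φ g₁)⁻¹ * g₁)) (m₁ - m₂) (m₂ - m₃)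
            (m₃ - ract m₃ (φ g₃ * g₃⁻¹)) -
          f (ract ((m₀ - m₁) - ract (m₀ - m₁) ((φ g₁)⁻¹ * g₁)) g₂) (ract (m₁ - m₂) g₂)
            (ract (m₂ - m₃) (φ g₂)) (ract (m₃ - ract m₃ (φ g₃ * g₃⁻¹)) (φ g₂)) :=
  birackX_three_cocycle_formula_general φ hφ f hf₁ hf₄ hfG

end GAlex
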